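/- Let g be an element of a group G acting linearly on a vector space V of dimension d over a field, and suppose G is generated by a conjugates of g together with no other elements needed, i.e. there exist a conjugates g_1,...,g_a of g with ⟨g_1,...,g_a⟩ = G. If G acts irreducibly on V with no nonzero fixed vectors, then dim C_V(g) ≤ ⌊(1 - 1/a)·d⌋. -/

import Mathlib

/-!
The subspace fixed by all of `g₁, …, gₐ` is fixed by the group they generate, hence is zero. Its
codimension `d` is at most the sum of the codimensions of the fixed spaces of the `gᵢ`, which all
agree with that of the conjugate `g`. So the fixed space of `g` has codimension at least `d / a`.
-/

section Codimension

variable {K V ι : Type*} [DivisionRing K] [AddCommGroup V] [Module K V] [Fintype ι]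

theorem finrank_quotient_iInf_le_sum (W : ι → Submodule K V) [∀ i, Module.Finite K (V ⧸ W i)] :
    Module.finrank K (V ⧸ ⨅ i, W i) ≤ ∑ i, Module.finrank K (V ⧸ W i) := by
  let π : V →ₗ[K] (i : ι) → V ⧸ W i := LinearMap.pi fun i ↦ (W i).mkQ
  have ker_π : LinearMap.ker π = ⨅ i, W i := by
    simp only [π, LinearMap.ker_pi, Submodule.ker_mkQ]
  calc
    Module.finrank K (V ⧸ ⨅ i, W i) = Module.finrank K (LinearMap.range π) := by
      rw [← ker_π, π.quotKerEquivRange.finrank_eq]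
    _ ≤ Module.finrank K ((i : ι) → V ⧸ W i) := Submodule.finrank_le _
    _ = ∑ i, Module.finrank K (V ⧸ W i) := Module.finrank_pi_fintype K

end Codimension

section FixedSpace

open LinearMap (GeneralLinearGroup)

variable {R M ι : Type*} [Semiring R] [AddCommMonoid M] [Module R M]

theorem forall_mem_closure_range_apply_eq_iff (gs : ι → GeneralLinearGroup R M) (v : M) :
    (∀ h ∈ Subgroup.closure (Set.range gs), (h : M →ₗ[R] M) v = v) ↔
      v ∈ ⨅ i, (gs i : M →ₗ[R] M).fixedSubmodule := by
  simp only [Submodule.mem_iInf, LinearMap.mem_fixedSubmodule_iff]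
  exact (Subgroup.closure_le (MulAction.stabilizer (GeneralLinearGroup R M) v)).trans
    Set.range_subset_iff

theorem fixedSubmodule_conj (h g : GeneralLinearGroup R M) :
    ((h * g * h⁻¹ : GeneralLinearGroup R M) : M →ₗ[R] M).fixedSubmodule =
      (g : M →ₗ[R] M).fixedSubmodule.map (h.toLinearEquiv : M →ₗ[R] M) := by
  ext v
  rw [Submodule.mem_map_equiv, LinearMap.mem_fixedSubmodule_iff, LinearMap.mem_fixedSubmodule_iff]
  change (h * g * h⁻¹) • v = v ↔ g • h⁻¹ • v = h⁻¹ • v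
  rw [mul_smul, mul_smul, eq_inv_smul_iff]

theorem finrank_fixedSubmodule_eq_of_isConj {g g' : GeneralLinearGroup R M} (hconj : IsConj g g') :
    Module.finrank R (g : M →ₗ[R] M).fixedSubmodule =
      Module.finrank R (g' : M →ₗ[R] M).fixedSubmodule := by
  obtain ⟨h, rfl⟩ := isConj_iff.mp hconj
  rw [fixedSubmodule_conj]
  exact (LinearEquiv.finrank_map_eq _ _).symm

end FixedSpace

section Generation

variable {K V : Type*} [DivisionRing K] [AddCommGroup V] [Module K V] [FiniteDimensional K V]

theorem finrank_le_card_mul_finrank_quotient_fixedSubmodule {ι : Type*} [Fintype ι]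
    {g : LinearMap.GeneralLinearGroup K V} {gs : ι → LinearMap.GeneralLinearGroup K V}
    (hconj : ∀ i, IsConj g (gs i)) (hfix : ⨅ i, (gs i : V →ₗ[K] V).fixedSubmodule = ⊥) :
    Module.finrank K V ≤
      Fintype.card ι * Module.finrank K (V ⧸ (g : V →ₗ[K] V).fixedSubmodule) := by
  have codim_eq (i : ι) : Module.finrank K (V ⧸ (gs i : V →ₗ[K] V).fixedSubmodule) =
      Module.finrank K (V ⧸ (g : V →ₗ[K] V).fixedSubmodule) := by
    rw [Submodule.finrank_quotient, Submodule.finrank_quotient,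
      finrank_fixedSubmodule_eq_of_isConj (hconj i)]
  calc
    Module.finrank K V = Module.finrank K (V ⧸ ⨅ i, (gs i : V →ₗ[K] V).fixedSubmodule) := by
      rw [hfix, (Submodule.quotEquivOfEqBot ⊥ rfl).finrank_eq]
    _ ≤ ∑ i, Module.finrank K (V ⧸ (gs i : V →ₗ[K] V).fixedSubmodule) :=
      finrank_quotient_iInf_le_sum _
    _ = Fintype.card ι * Module.finrank K (V ⧸ (g : V →ₗ[K] V).fixedSubmodule) := by
      simp only [codim_eq, Finset.sum_const, Finset.card_univ, smul_eq_mul]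

theorem stmt_6_general (d : ℕ) (hd : Module.finrank K V = d)
    (G : Subgroup (LinearMap.GeneralLinearGroup K V)) (g : LinearMap.GeneralLinearGroup K V)
    (a : ℕ) (ha : 0 < a) (gs : Fin a → LinearMap.GeneralLinearGroup K V)
    (hconj : ∀ i, IsConj g (gs i)) (hgen : Subgroup.closure (Set.range gs) = G)
    (hnofix : ∀ v : V, (∀ h ∈ G, (h : V →ₗ[K] V) v = v) → v = 0) :
    (Module.finrank K (g : V →ₗ[K] V).fixedSubmodule : ℤ) ≤ ⌊(1 - (1 : ℚ) / a) * d⌋ := by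
  subst hd hgen
  have iInf_fixed_eq_bot : ⨅ i, (gs i : V →ₗ[K] V).fixedSubmodule = ⊥ :=
    (Submodule.eq_bot_iff _).mpr fun v hv ↦
      hnofix v ((forall_mem_closure_range_apply_eq_iff gs v).mpr hv)
  have finrank_le_mul_codim :=
    finrank_le_card_mul_finrank_quotient_fixedSubmodule hconj iInf_fixed_eq_bot
  rw [Fintype.card_fin] at finrank_le_mul_codim
  have codim_add_finrank :
      (Module.finrank K (V ⧸ (g : V →ₗ[K] V).fixedSubmodule) +
        Module.finrank K (g : V →ₗ[K] V).fixedSubmodule : ℚ) = Module.finrank K V := by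
    exact_mod_cast (g : V →ₗ[K] V).fixedSubmodule.finrank_quotient_add_finrank
  have div_le_codim : (Module.finrank K V : ℚ) / a ≤
      Module.finrank K (V ⧸ (g : V →ₗ[K] V).fixedSubmodule) := by
    rw [div_le_iff₀' (by exact_mod_cast ha)]
    exact_mod_cast finrank_le_mul_codim
  rw [Int.le_floor, Int.cast_natCast, sub_mul, one_mul, one_div_mul_eq_div]
  linarith

end Generation

theorem stmt_6 {F : Type*} [Field F] {V : Type*} [AddCommGroup V] [Module F V]
    [FiniteDimensional F V] (d : ℕ) (hd : Module.finrank F V = d)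
    (G : Subgroup (LinearMap.GeneralLinearGroup F V)) (g : LinearMap.GeneralLinearGroup F V)
    (hg : g ∈ G) (a : ℕ) (ha : 0 < a) (gs : Fin a → LinearMap.GeneralLinearGroup F V)
    (hconj : ∀ i, ∃ h ∈ G, gs i = h * g * h⁻¹)
    (hgen : Subgroup.closure (Set.range gs) = G)
    (hirr : ∀ W : Submodule F V, (∀ h ∈ G, ∀ w ∈ W, (h : V →ₗ[F] V) w ∈ W) → W = ⊥ ∨ W = ⊤)
    (hnofix : ∀ v : V, (∀ h ∈ G, (h : V →ₗ[F] V) v = v) → v = 0) :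
    (Module.finrank F ↥(LinearMap.ker ((g : V →ₗ[F] V) - LinearMap.id)) : ℤ)
      ≤ ⌊(1 - (1 : ℚ) / a) * d⌋ := by
  rw [← LinearMap.fixedSubmodule_eq_ker]
  exact stmt_6_general d hd G g a ha gs
    (fun i ↦ let ⟨h, _, hi⟩ := hconj i; isConj_iff.mpr ⟨h, hi.symm⟩) hgen hnofix
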